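/- Phragmén's unordered method satisfies PJR: for every profile, every number M of seats, and every possible outcome E of Phragmén's unordered method, E provides PJR. Moreover, Phragmén's unordered method does not satisfy EJR: there exist a profile, a number M of seats, and a possible outcome E of Phragmén's unordered method that does not provide EJR. -/

import Mathlib

open Finset

/-- The number of ballots containing candidate `i` (as a rational number). -/
def phVotes {C : Type} [Fintype C] [DecidableEq C] (v : Finset C → ℕ) (i : C) : ℚ :=
  ∑ σ ∈ Finset.univ.filter (fun σ : Finset C => i ∈ σ), (v σ : ℚ)

/-- Phragmén's `t_i = (1 + Σ_{σ∋i} v_σ r_σ)/(Σ_{σ∋i} v_σ)` for the current loads `r`. -/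
def phT {C : Type} [Fintype C] [DecidableEq C]
    (v : Finset C → ℕ) (r : Finset C → ℚ) (i : C) : ℚ :=
  (1 + ∑ σ ∈ Finset.univ.filter (fun σ : Finset C => i ∈ σ), (v σ : ℚ) * r σ) / phVotes v i

/-- The ballot loads after electing the candidates in the list `l`
(most recently elected first); initially all loads are `0`, and when `i` is
elected the load of every ballot containing `i` is set to `t_i`. -/
def phLoads {C : Type} [Fintype C] [DecidableEq C] (v : Finset C → ℕ) :
    List C → Finset C → ℚ
  | [], _ => 0
  | i :: l, σ => if i ∈ σ then phT v (phLoads v l) i else phLoads v l σ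

/-- `l` (most recently elected first) is a valid sequence of elections for
Phragmén's unordered method: each newly elected candidate is a not yet elected
candidate with positive vote count minimizing `t_i`. -/
def phValid {C : Type} [Fintype C] [DecidableEq C] (v : Finset C → ℕ) : List C → Prop
  | [] => True
  | i :: l => phValid v l ∧ i ∉ l ∧ 0 < phVotes v i ∧
      ∀ j : C, j ∉ l → 0 < phVotes v j →
        phT v (phLoads v l) i ≤ phT v (phLoads v l) j

/-- `S` is a possible outcome of Phragmén's unordered method for `M` seats:
its elements can be elected in some order by the rule, ties broken arbitrarily. -/
def PhragmenOutcome {C : Type} [Fintype C] [DecidableEq C]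
    (v : Finset C → ℕ) (M : ℕ) (S : Finset C) : Prop :=
  ∃ l : List C, phValid v l ∧ l.length = M ∧ l.toFinset = S

/-- The outcome `E` (for `M` seats) provides PJR (proportional justified
representation): for every `1 ≤ ℓ ≤ M` and every sub-multiset `g ≤ v` of the
ballots with `|A| ≥ (ℓ/M)·V` whose ballots have at least `ℓ` candidates in common,
at least `ℓ` candidates appearing on some ballot of the group are elected. -/
def ProvidesPJR {C : Type} [Fintype C] [DecidableEq C]
    (v : Finset C → ℕ) (M : ℕ) (E : Finset C) : Prop :=
  ∀ (ℓ : ℕ) (g : Finset C → ℕ), 1 ≤ ℓ → ℓ ≤ M → (∀ σ, g σ ≤ v σ) →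
    (ℓ : ℚ) * (∑ σ : Finset C, (v σ : ℚ)) ≤ (M : ℚ) * (∑ σ : Finset C, (g σ : ℚ)) →
    (∃ T : Finset C, ℓ ≤ T.card ∧ ∀ σ : Finset C, 0 < g σ → T ⊆ σ) →
    ℓ ≤ (E ∩ (Finset.univ.filter fun σ : Finset C => 0 < g σ).biUnion id).card

/-- The outcome `E` (for `M` seats) provides EJR (extended justified
representation): for every `1 ≤ ℓ ≤ M` and every sub-multiset `g ≤ v` of the
ballots with `|A| ≥ (ℓ/M)·V` whose ballots have at least `ℓ` candidates in common,
some ballot of the group contains at least `ℓ` elected candidates. -/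
def ProvidesEJR {C : Type} [Fintype C] [DecidableEq C]
    (v : Finset C → ℕ) (M : ℕ) (E : Finset C) : Prop :=
  ∀ (ℓ : ℕ) (g : Finset C → ℕ), 1 ≤ ℓ → ℓ ≤ M → (∀ σ, g σ ≤ v σ) →
    (ℓ : ℚ) * (∑ σ : Finset C, (v σ : ℚ)) ≤ (M : ℚ) * (∑ σ : Finset C, (g σ : ℚ)) →
    (∃ T : Finset C, ℓ ≤ T.card ∧ ∀ σ : Finset C, 0 < g σ → T ⊆ σ) →
    ∃ σ : Finset C, 0 < g σ ∧ ℓ ≤ (σ ∩ E).card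

/-!
Phragmén's rule can be run as a water-filling process: all ballots earn money at unit rate, and a
candidate is bought as soon as her supporters own one unit; `t_i` is the time of that purchase and
the load of a ballot is the time up to which its earnings are spent.

PJR: let `t` be the time of the last purchase, `V` the number of voters, and suppose that the group
`g`, entitled to `ℓ` of the `M` seats, has a common candidate who is still not elected. At most
`V * t` has been earned, so `M ≤ V * t`, and the group has earned at least `ℓ`. If `M < V * t`, it
has earned more than `ℓ`, but just before the last purchase it held at most `1` unspent,
so it has spent more than `ℓ - 1` on candidates of its own; they number at least `ℓ`. If
`M = V * t`, everything earned is spent, and the group has paid `ℓ` in full.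

EJR: two of eleven voters approve `a` and `b`, and deserve two of eleven seats; but a third voter
first helps one of them to buy `c` and then the other to buy `d`, which leaves the two short of
`a` and `b` until all seats are filled.
-/

section GroupLoad

variable {C : Type*} [Fintype C]

/-- The total load carried by the ballots of the group `g` when each ballot of type `σ` has load
`r σ`. The whole electorate is the group `g = v`. -/
def groupLoad (g : Finset C → ℕ) (r : Finset C → ℚ) : ℚ :=
  ∑ σ, (g σ : ℚ) * r σ

lemma sum_mul_sub_eq_sub_groupLoad (g : Finset C → ℕ) (r : Finset C → ℚ) (t : ℚ) :
    ∑ σ, (g σ : ℚ) * (t - r σ) = (∑ σ, (g σ : ℚ)) * t - groupLoad g r := by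
  simp only [groupLoad, mul_sub, sum_sub_distrib, sum_mul]

lemma sum_mul_eq_groupLoad_of_le {g v : Finset C → ℕ} {r : Finset C → ℚ} {t : ℚ}
    (hg : ∀ σ, g σ ≤ v σ) (hr : ∀ σ, r σ ≤ t) (hv : (∑ σ, (v σ : ℚ)) * t = groupLoad v r) :
    (∑ σ, (g σ : ℚ)) * t = groupLoad g r := by
  have hslack : ∀ σ, 0 ≤ t - r σ := fun σ => sub_nonneg.2 (hr σ)
  rw [← sub_eq_zero, ← sum_mul_sub_eq_sub_groupLoad] at hv ⊢
  refine le_antisymm (hv ▸ ?_) (sum_nonneg fun σ _ => mul_nonneg (Nat.cast_nonneg _) (hslack σ))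
  gcongr with σ
  · exact hslack σ
  · exact hg σ

lemma sum_mul_le_sum_filter_mul [DecidableEq C] {g v : Finset C → ℕ} {f : Finset C → ℚ} {j : C}
    (hg : ∀ σ, g σ ≤ v σ) (hf : ∀ σ, 0 ≤ f σ) (hj : ∀ σ, 0 < g σ → j ∈ σ) :
    ∑ σ, (g σ : ℚ) * f σ ≤ ∑ σ with j ∈ σ, (v σ : ℚ) * f σ := by
  have hsupp : ∀ σ ∈ univ, (g σ : ℚ) * f σ ≠ 0 → j ∈ σ := fun σ _ hσ =>
    hj σ (Nat.pos_of_ne_zero fun h0 => hσ (by simp [h0]))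
  rw [← sum_filter_of_ne hsupp]
  exact sum_le_sum fun σ _ => mul_le_mul_of_nonneg_right (Nat.cast_le.2 (hg σ)) (hf σ)

end GroupLoad

section WaterFilling

variable {C : Type} [Fintype C] [DecidableEq C] {v g : Finset C → ℕ} {r r' : Finset C → ℚ}
  {i j : C} {l : List C} {U : Finset C} {ℓ : ℕ} {t : ℚ}

lemma sum_filter_mul_sub (v : Finset C → ℕ) (r : Finset C → ℚ) (i : C) (t : ℚ) :
    ∑ σ with i ∈ σ, (v σ : ℚ) * (t - r σ) =
      t * phVotes v i - ∑ σ with i ∈ σ, (v σ : ℚ) * r σ := by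
  simp only [phVotes, mul_sub, sum_sub_distrib, mul_comm t, sum_mul]

lemma le_phT_iff (hi : 0 < phVotes v i) :
    t ≤ phT v r i ↔ ∑ σ with i ∈ σ, (v σ : ℚ) * (t - r σ) ≤ 1 := by
  rw [phT, le_div_iff₀ hi, sum_filter_mul_sub, sub_le_iff_le_add]

lemma sum_mul_phT_sub_eq_one (hi : 0 < phVotes v i) :
    ∑ σ with i ∈ σ, (v σ : ℚ) * (phT v r i - r σ) = 1 := by
  rw [sum_filter_mul_sub, phT, div_mul_cancel₀ _ hi.ne', add_sub_cancel_right]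

lemma phVotes_nonneg (v : Finset C → ℕ) (i : C) : 0 ≤ phVotes v i :=
  sum_nonneg fun _ _ => Nat.cast_nonneg _

lemma phVotes_pos_of_mem {σ : Finset C} (hσ : 0 < v σ) (hi : i ∈ σ) : 0 < phVotes v i :=
  sum_pos' (fun _ _ => Nat.cast_nonneg _) ⟨σ, by simpa using hi, Nat.cast_pos.2 hσ⟩

lemma phVotes_le_sum (v : Finset C → ℕ) (i : C) : phVotes v i ≤ ∑ σ, (v σ : ℚ) :=
  sum_le_sum_of_subset_of_nonneg (filter_subset _ _) fun _ _ _ => Nat.cast_nonneg _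

lemma phT_mono (h : ∀ σ, r σ ≤ r' σ) (i : C) : phT v r i ≤ phT v r' i := by
  unfold phT
  gcongr
  · exact phVotes_nonneg v i
  · exact h _

lemma phT_zero_nonneg (v : Finset C → ℕ) (i : C) : 0 ≤ phT v (fun _ => 0) i := by
  simpa [phT] using phVotes_nonneg v i

lemma phLoads_cons_le_phT_of_forall_le
    (h : ∀ σ, phLoads v l σ ≤ phT v (phLoads v l) i) (σ : Finset C) :
    phLoads v (i :: l) σ ≤ phT v (phLoads v l) i := by
  rw [phLoads]
  split_ifs
  exacts [le_rfl, h σ]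

lemma phLoads_le_phLoads_cons_of_forall_le
    (h : ∀ σ, phLoads v l σ ≤ phT v (phLoads v l) i) (σ : Finset C) :
    phLoads v l σ ≤ phLoads v (i :: l) σ := by
  rw [phLoads]
  split_ifs
  exacts [h σ, le_rfl]

lemma phValid.phLoads_le_phT (hl : phValid v l) (hj : j ∉ l) (hj₀ : 0 < phVotes v j)
    (σ : Finset C) : phLoads v l σ ≤ phT v (phLoads v l) j := by
  induction l generalizing j σ with
  | nil => exact phT_zero_nonneg v j
  | cons i l ih =>
    obtain ⟨hl, hil, hi₀, hmin⟩ := hl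
    have hle := ih hl hil hi₀
    calc phLoads v (i :: l) σ ≤ phT v (phLoads v l) i := phLoads_cons_le_phT_of_forall_le hle σ
      _ ≤ phT v (phLoads v l) j := hmin j (List.not_mem_of_not_mem_cons hj) hj₀
      _ ≤ phT v (phLoads v (i :: l)) j := phT_mono (phLoads_le_phLoads_cons_of_forall_le hle) j

lemma groupLoad_phLoads_cons (g v : Finset C → ℕ) (i : C) (l : List C) :
    groupLoad g (phLoads v (i :: l)) = groupLoad g (phLoads v l) +
      ∑ σ with i ∈ σ, (g σ : ℚ) * (phT v (phLoads v l) i - phLoads v l σ) := by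
  rw [groupLoad, groupLoad, sum_filter, ← sum_add_distrib]
  refine sum_congr rfl fun σ _ => ?_
  rw [phLoads]
  split_ifs <;> ring

lemma phValid.groupLoad_eq_length (hl : phValid v l) :
    groupLoad v (phLoads v l) = l.length := by
  induction l with
  | nil => simp [groupLoad, phLoads]
  | cons i l ih =>
    obtain ⟨hl, -, hi₀, -⟩ := hl
    rw [groupLoad_phLoads_cons, ih hl, sum_mul_phT_sub_eq_one hi₀, List.length_cons,
      Nat.cast_succ]

lemma phValid.groupLoad_le_card_inter (hl : phValid v l) (hg : ∀ σ, g σ ≤ v σ)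
    (hU : ∀ σ, 0 < g σ → σ ⊆ U) : groupLoad g (phLoads v l) ≤ #(l.toFinset ∩ U) := by
  induction l with
  | nil => simp [groupLoad, phLoads]
  | cons i l ih =>
    obtain ⟨hl, hil, hi₀, -⟩ := hl
    rw [groupLoad_phLoads_cons, List.toFinset_cons]
    by_cases hi : i ∈ U
    · rw [insert_inter_of_mem hi, card_insert_of_notMem (by simp [hil]), Nat.cast_succ]
      gcongr
      · exact ih hl
      · rw [← sum_mul_phT_sub_eq_one (r := phLoads v l) hi₀]
        gcongr with σ
        · exact sub_nonneg.2 (hl.phLoads_le_phT hil hi₀ σ)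
        · exact hg σ
    · have hpaid : ∀ σ ∈ ({σ | i ∈ σ} : Finset (Finset C)),
          (g σ : ℚ) * (phT v (phLoads v l) i - phLoads v l σ) = 0 := fun σ hσ => by
        have hgσ : g σ = 0 :=
          Nat.eq_zero_of_not_pos fun hpos => hi (hU σ hpos (mem_filter.1 hσ).2)
        rw [hgσ, Nat.cast_zero, zero_mul]
      rw [insert_inter_of_notMem hi, sum_eq_zero hpaid, add_zero]
      exact ih hl

lemma phValid.phLoads_cons_le_phT (hl : phValid v (i :: l)) (σ : Finset C) :
    phLoads v (i :: l) σ ≤ phT v (phLoads v l) i :=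
  phLoads_cons_le_phT_of_forall_le (hl.1.phLoads_le_phT hl.2.1 hl.2.2.1) σ

lemma phValid.length_le_sum_mul_phT (hl : phValid v (i :: l)) :
    ((i :: l).length : ℚ) ≤ (∑ σ, (v σ : ℚ)) * phT v (phLoads v l) i := by
  rw [← hl.groupLoad_eq_length, groupLoad, sum_mul]
  gcongr with σ
  exact hl.phLoads_cons_le_phT σ

lemma phValid.sum_mul_phT_le_groupLoad_add_one (hl : phValid v (i :: l)) (hg : ∀ σ, g σ ≤ v σ)
    (hjl : j ∉ l) (hj₀ : 0 < phVotes v j) (hj : ∀ σ, 0 < g σ → j ∈ σ) :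
    (∑ σ, (g σ : ℚ)) * phT v (phLoads v l) i ≤ groupLoad g (phLoads v l) + 1 := by
  obtain ⟨hl, hil, hi₀, hmin⟩ := hl
  rw [← sub_le_iff_le_add', ← sum_mul_sub_eq_sub_groupLoad]
  calc ∑ σ, (g σ : ℚ) * (phT v (phLoads v l) i - phLoads v l σ)
      ≤ ∑ σ with j ∈ σ, (v σ : ℚ) * (phT v (phLoads v l) i - phLoads v l σ) :=
        sum_mul_le_sum_filter_mul hg (fun σ => sub_nonneg.2 (hl.phLoads_le_phT hil hi₀ σ)) hj
    _ ≤ 1 := (le_phT_iff hj₀).1 (hmin j hjl hj₀)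

lemma phValid.exists_ballot_of_entitled (hl : phValid v (i :: l)) (hℓ : 0 < ℓ)
    (hsize : (ℓ : ℚ) * ∑ σ, (v σ : ℚ) ≤ (i :: l).length * ∑ σ, (g σ : ℚ)) : ∃ σ, 0 < g σ := by
  have hV : 0 < ∑ σ, (v σ : ℚ) := hl.2.2.1.trans_le (phVotes_le_sum v i)
  have hG : ∑ σ, (g σ : ℚ) ≠ 0 := fun h0 => by
    rw [h0, mul_zero] at hsize
    exact hsize.not_gt (mul_pos (Nat.cast_pos.2 hℓ) hV)
  obtain ⟨σ, -, hσ⟩ := exists_ne_zero_of_sum_ne_zero hG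
  exact ⟨σ, Nat.pos_of_ne_zero (Nat.cast_ne_zero.1 hσ)⟩

lemma phValid.le_card_inter_of_notMem (hl : phValid v (i :: l)) (hg : ∀ σ, g σ ≤ v σ)
    (hU : ∀ σ, 0 < g σ → σ ⊆ U) (hℓ : 0 < ℓ)
    (hsize : (ℓ : ℚ) * ∑ σ, (v σ : ℚ) ≤ (i :: l).length * ∑ σ, (g σ : ℚ))
    (hjl : j ∉ l) (hj₀ : 0 < phVotes v j) (hj : ∀ σ, 0 < g σ → j ∈ σ) :
    ℓ ≤ #((i :: l).toFinset ∩ U) := by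
  set t := phT v (phLoads v l) i
  have hM : (0 : ℚ) < (i :: l).length := Nat.cast_pos.2 (List.length_pos_of_mem List.mem_cons_self)
  have hℓ' : (0 : ℚ) < ℓ := Nat.cast_pos.2 hℓ
  have hMV := hl.length_le_sum_mul_phT
  have ht : 0 < t :=
    pos_of_mul_pos_right (hM.trans_le hMV) (sum_nonneg fun _ _ => Nat.cast_nonneg _)
  have hearned : ℓ * ((∑ σ, (v σ : ℚ)) * t) ≤ (i :: l).length * ((∑ σ, (g σ : ℚ)) * t) := by
    simpa only [mul_assoc] using mul_le_mul_of_nonneg_right hsize ht.le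
  rcases hMV.eq_or_lt with heq | hlt
  · have hspent : (∑ σ, (g σ : ℚ)) * t = groupLoad g (phLoads v (i :: l)) :=
      sum_mul_eq_groupLoad_of_le hg hl.phLoads_cons_le_phT
        (heq.symm.trans hl.groupLoad_eq_length.symm)
    have hℓt : (ℓ : ℚ) ≤ (∑ σ, (g σ : ℚ)) * t := by
      rw [← heq, mul_comm] at hearned
      exact le_of_mul_le_mul_left hearned hM
    exact_mod_cast hℓt.trans (hspent.trans_le (hl.groupLoad_le_card_inter hg hU))
  · have hℓt : (ℓ : ℚ) < (∑ σ, (g σ : ℚ)) * t := by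
      refine lt_of_mul_lt_mul_left (lt_of_lt_of_le ?_ hearned) hM.le
      rw [mul_comm]
      exact mul_lt_mul_of_pos_left hlt hℓ'
    have hcard : (ℓ : ℚ) < #(l.toFinset ∩ U) + 1 := hℓt.trans_le <|
      (hl.sum_mul_phT_le_groupLoad_add_one hg hjl hj₀ hj).trans <| by
        gcongr
        exact hl.1.groupLoad_le_card_inter hg hU
    calc ℓ ≤ #(l.toFinset ∩ U) := Nat.lt_succ_iff.1 (by exact_mod_cast hcard)
      _ ≤ #((i :: l).toFinset ∩ U) := by
        gcongr
        exact fun x hx => List.mem_toFinset.2 (List.mem_cons_of_mem i (List.mem_toFinset.1 hx))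

theorem PhragmenOutcome.providesPJR {M : ℕ} {E : Finset C} (hE : PhragmenOutcome v M E) :
    ProvidesPJR v M E := by
  obtain ⟨l, hl, rfl, rfl⟩ := hE
  rintro ℓ g hℓ hℓM hg hsize ⟨T, hT, hTg⟩
  obtain ⟨i, l, rfl⟩ := List.exists_cons_of_length_pos (Nat.lt_of_lt_of_le hℓ hℓM)
  set U := ({σ | 0 < g σ} : Finset (Finset C)).biUnion id
  have hU : ∀ σ, 0 < g σ → σ ⊆ U := fun σ hσ =>
    subset_biUnion_of_mem id (mem_filter.2 ⟨mem_univ σ, hσ⟩)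
  obtain ⟨σ, hσ⟩ := hl.exists_ballot_of_entitled hℓ hsize
  by_cases hTE : T ⊆ (i :: l).toFinset
  · exact hT.trans (card_le_card (subset_inter hTE ((hTg σ hσ).trans (hU σ hσ))))
  · obtain ⟨j, hjT, hjE⟩ := not_subset.1 hTE
    have hjl : j ∉ l := fun h => hjE (List.mem_toFinset.2 (List.mem_cons_of_mem i h))
    have hj₀ : 0 < phVotes v j := phVotes_pos_of_mem (hσ.trans_le (hg σ)) (hTg σ hσ hjT)
    exact hl.le_card_inter_of_notMem hg hU hℓ hsize hjl hj₀ fun σ hσ => hTg σ hσ hjT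

end WaterFilling

section BlockProfile

variable {ι C : Type*} [Fintype ι] [DecidableEq C] {B : ι → Finset C} {w g : ι → ℕ}

/-- The profile of an electorate divided into blocks, where each of the `w k` voters of block `k`
casts the ballot `B k`; several blocks may cast the same ballot. Sums over its ballots become sums
over blocks, which makes examples computable. -/
def blockProfile (B : ι → Finset C) (w : ι → ℕ) (σ : Finset C) : ℕ :=
  ∑ k with B k = σ, w k

lemma blockProfile_mono (h : ∀ k, g k ≤ w k) (σ : Finset C) :
    blockProfile B g σ ≤ blockProfile B w σ :=
  sum_le_sum fun k _ => h k

lemma exists_block_of_blockProfile_pos {σ : Finset C} (h : 0 < blockProfile B w σ) :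
    ∃ k, B k = σ ∧ 0 < w k := by
  obtain ⟨k, hk, hwk⟩ := exists_ne_zero_of_sum_ne_zero h.ne'
  exact ⟨k, (mem_filter.1 hk).2, Nat.pos_of_ne_zero hwk⟩

variable [Fintype C]

lemma sum_blockProfile_mul (B : ι → Finset C) (w : ι → ℕ) (f : Finset C → ℚ) :
    ∑ σ, (blockProfile B w σ : ℚ) * f σ = ∑ k, (w k : ℚ) * f (B k) := by
  rw [← sum_fiberwise univ B]
  refine sum_congr rfl fun σ _ => ?_
  rw [blockProfile, Nat.cast_sum, sum_mul]
  exact sum_congr rfl fun k hk => by rw [(mem_filter.1 hk).2]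

lemma sum_blockProfile (B : ι → Finset C) (w : ι → ℕ) :
    ∑ σ, blockProfile B w σ = ∑ k, w k :=
  sum_fiberwise univ B w

lemma sum_filter_blockProfile_mul (B : ι → Finset C) (w : ι → ℕ) (f : Finset C → ℚ) (i : C) :
    ∑ σ with i ∈ σ, (blockProfile B w σ : ℚ) * f σ = ∑ k with i ∈ B k, (w k : ℚ) * f (B k) := by
  simpa only [sum_filter, mul_ite, mul_zero] using
    sum_blockProfile_mul B w fun σ => if i ∈ σ then f σ else 0

end BlockProfile

section BlockRun

variable {ι : Type*} {C : Type} [Fintype ι] [DecidableEq C] {B : ι → Finset C} {w g : ι → ℕ}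

/-- Phragmén's `t_i` for `blockProfile B w` when the ballots of block `k` have load `r k`. -/
def blockT (B : ι → Finset C) (w : ι → ℕ) (r : ι → ℚ) (i : C) : ℚ :=
  (1 + ∑ k with i ∈ B k, (w k : ℚ) * r k) / ∑ k with i ∈ B k, (w k : ℚ)

variable [Fintype C]

/-- Electing the candidates of `l`, most recently elected first, is valid for `blockProfile B w`
and leaves the ballots of block `k` with load `r k`. -/
def IsBlockRun (B : ι → Finset C) (w : ι → ℕ) (l : List C) (r : ι → ℚ) : Prop :=
  phValid (blockProfile B w) l ∧ phLoads (blockProfile B w) l ∘ B = r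

lemma phVotes_blockProfile (B : ι → Finset C) (w : ι → ℕ) (i : C) :
    phVotes (blockProfile B w) i = ∑ k with i ∈ B k, (w k : ℚ) := by
  simpa only [phVotes, mul_one] using sum_filter_blockProfile_mul B w (fun _ => 1) i

lemma phT_blockProfile (B : ι → Finset C) (w : ι → ℕ) (r : Finset C → ℚ) (i : C) :
    phT (blockProfile B w) r i = blockT B w (r ∘ B) i := by
  rw [phT, phVotes_blockProfile, sum_filter_blockProfile_mul]
  rfl

lemma IsBlockRun.cons {l : List C} {r r' : ι → ℚ} {i : C} (h : IsBlockRun B w l r)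
    (hi : i ∉ l ∧ 0 < ∑ k with i ∈ B k, (w k : ℚ) ∧
      (∀ j, j ∉ l → 0 < ∑ k with j ∈ B k, (w k : ℚ) → blockT B w r i ≤ blockT B w r j) ∧
      ∀ k, r' k = if i ∈ B k then blockT B w r i else r k) :
    IsBlockRun B w (i :: l) r' := by
  obtain ⟨hl, rfl⟩ := h
  obtain ⟨hil, hi₀, hmin, hr'⟩ := hi
  refine ⟨⟨hl, hil, by rwa [phVotes_blockProfile], fun j hj hj₀ => ?_⟩, funext fun k => ?_⟩
  · rw [phVotes_blockProfile] at hj₀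
    simpa only [phT_blockProfile] using hmin j hj hj₀
  · rw [hr' k, Function.comp_apply, phLoads, phT_blockProfile]
    rfl

lemma ProvidesEJR.exists_block {M ℓ : ℕ} {E T : Finset C}
    (h : ProvidesEJR (blockProfile B w) M E) (hℓ : 1 ≤ ℓ) (hℓM : ℓ ≤ M) (hg : ∀ k, g k ≤ w k)
    (hsize : ℓ * ∑ k, w k ≤ M * ∑ k, g k) (hT : ℓ ≤ #T) (hTg : ∀ k, 0 < g k → T ⊆ B k) :
    ∃ k, 0 < g k ∧ ℓ ≤ #(B k ∩ E) := by
  have hsize' : (ℓ : ℚ) * ∑ σ, (blockProfile B w σ : ℚ) ≤ M * ∑ σ, (blockProfile B g σ : ℚ) := by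
    rw [← sum_blockProfile B w, ← sum_blockProfile B g] at hsize
    exact_mod_cast hsize
  have hcommon : ∀ σ, 0 < blockProfile B g σ → T ⊆ σ := fun σ hσ => by
    obtain ⟨k, rfl, hk⟩ := exists_block_of_blockProfile_pos hσ
    exact hTg k hk
  obtain ⟨σ, hσ, hℓσ⟩ :=
    h ℓ (blockProfile B g) hℓ hℓM (blockProfile_mono hg) hsize' ⟨T, hT, hcommon⟩
  obtain ⟨k, rfl, hk⟩ := exists_block_of_blockProfile_pos hσ
  exact ⟨k, hk, hℓσ⟩

end BlockRun

namespace EJRCounterexample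

/-- The ballots `{a, b, c}`, `{c, d}`, `{a, b, d}` and one approving nine further candidates, where
`a`, `b`, `c`, `d` are numbered `0`, `1`, `2`, `3`. -/
def ballot : Fin 4 → Finset (Fin 13) :=
  ![{0, 1, 2}, {2, 3}, {0, 1, 3}, {4, 5, 6, 7, 8, 9, 10, 11, 12}]

/-- The number of voters casting each of the four ballots. -/
def voters : Fin 4 → ℕ :=
  ![1, 1, 1, 8]

/-- The elected candidates, most recently elected first. -/
def elected : List (Fin 13) :=
  [12, 11, 10, 3, 9, 8, 2, 7, 6, 5, 4]

-- The eight voters of the last block buy one of their candidates at each multiple of `1/8`; at the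
-- times `1/2`, `3/4` and `9/8`, ties are resolved against `a` and `b`.
lemma isBlockRun_elected : IsBlockRun ballot voters elected ![1/2, 3/4, 3/4, 9/8] := by
  have h₀ : IsBlockRun ballot voters [] 0 := ⟨trivial, rfl⟩
  have h₁ := h₀.cons (i := 4) (r' := ![0, 0, 0, 1/8]) (by decide +kernel)
  have h₂ := h₁.cons (i := 5) (r' := ![0, 0, 0, 2/8]) (by decide +kernel)
  have h₃ := h₂.cons (i := 6) (r' := ![0, 0, 0, 3/8]) (by decide +kernel)
  have h₄ := h₃.cons (i := 7) (r' := ![0, 0, 0, 4/8]) (by decide +kernel)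
  have h₅ := h₄.cons (i := 2) (r' := ![1/2, 1/2, 0, 4/8]) (by decide +kernel)
  have h₆ := h₅.cons (i := 8) (r' := ![1/2, 1/2, 0, 5/8]) (by decide +kernel)
  have h₇ := h₆.cons (i := 9) (r' := ![1/2, 1/2, 0, 6/8]) (by decide +kernel)
  have h₈ := h₇.cons (i := 3) (r' := ![1/2, 3/4, 3/4, 6/8]) (by decide +kernel)
  have h₉ := h₈.cons (i := 10) (r' := ![1/2, 3/4, 3/4, 7/8]) (by decide +kernel)
  have h₁₀ := h₉.cons (i := 11) (r' := ![1/2, 3/4, 3/4, 8/8]) (by decide +kernel)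
  exact h₁₀.cons (i := 12) (by decide +kernel)

lemma phragmenOutcome_elected :
    PhragmenOutcome (blockProfile ballot voters) 11 elected.toFinset :=
  ⟨elected, isBlockRun_elected.1, rfl, rfl⟩

lemma not_providesEJR_elected :
    ¬ ProvidesEJR (blockProfile ballot voters) 11 elected.toFinset := fun h =>
  absurd (h.exists_block (ℓ := 2) (g := ![1, 0, 1, 0]) (T := {0, 1}) (by decide) (by decide)
    (by decide) (by decide) (by decide) (by decide)) (by decide)

end EJRCounterexample

/-- Phragmén's unordered method satisfies PJR (every possible outcome on every
profile provides PJR), but does not satisfy EJR (some possible outcome on some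
profile fails EJR). -/
theorem stmt_11 :
    (∀ (C : Type) [Fintype C] [DecidableEq C] (v : Finset C → ℕ) (M : ℕ)
        (E : Finset C), v ∅ = 0 → 1 ≤ M → M ≤ Fintype.card C →
        0 < ∑ σ : Finset C, v σ →
        PhragmenOutcome v M E → ProvidesPJR v M E)
    ∧ (∃ (N : ℕ) (v : Finset (Fin N) → ℕ) (M : ℕ) (E : Finset (Fin N)),
        v ∅ = 0 ∧ 1 ≤ M ∧ M ≤ N ∧ 0 < (∑ σ : Finset (Fin N), v σ) ∧
        PhragmenOutcome v M E ∧ ¬ ProvidesEJR v M E) := by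
  open EJRCounterexample in
  refine ⟨fun C _ _ v M E _ _ _ _ hE => hE.providesPJR,
    13, blockProfile ballot voters, 11, elected.toFinset, ?_, by decide, by decide, ?_,
    phragmenOutcome_elected, not_providesEJR_elected⟩
  · decide
  · rw [sum_blockProfile]
    decide
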